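/- arXiv:1309.2393 — 2 statements merged into one kernel-verified Lean document; each statement's English description precedes it below -/
import Mathlib

section
/- Let X be a nonempty set, H a Hermitian kernel on X, and L a positive semidefinite kernel on X such that both L − H and L + H are positive semidefinite. Then there exist positive semidefinite kernels H₊ and H₋ on X such that H = H₊ − H₋, both L − H₊ and L − H₋ are positive semidefinite, and H₊ and H₋ are independent in the sense that every positive semidefinite kernel P on X for which H₊ − P and H₋ − P are both positive semidefinite is the zero kernel. -/
open scoped ComplexOrder

/-- The inner product `[f,g]_K = ∑_{x,y} K(x,y) f(y) conj(g(x))` associated to a kernel `K`,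
for finitely supported `f, g : X → ℂ`. -/
noncomputable def kerIP {X : Type*} (K : X → X → ℂ) (f g : X →₀ ℂ) : ℂ :=
  ∑ x ∈ g.support, ∑ y ∈ f.support, K x y * f y * (starRingEnd ℂ) (g x)

/-- A kernel is positive semidefinite if `[f,f]_K` is real and nonnegative for all
finitely supported `f`. -/
def IsPSDKernel {X : Type*} (K : X → X → ℂ) : Prop := ∀ f : X →₀ ℂ, 0 ≤ kerIP K f f

/-- A kernel is Hermitian if `K(x,y) = conj (K(y,x))`. -/
def IsHermitianKernel {X : Type*} (K : X → X → ℂ) : Prop :=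
  ∀ x y, K x y = (starRingEnd ℂ) (K y x)

lemma kerIP_sub' {X : Type*} (K M : X → X → ℂ) (f g : X →₀ ℂ) :
    kerIP (fun x y => K x y - M x y) f g = kerIP K f g - kerIP M f g := by
  simp only [kerIP, sub_mul, Finset.sum_sub_distrib]

lemma kerIP_add' {X : Type*} (K M : X → X → ℂ) (f g : X →₀ ℂ) :
    kerIP (fun x y => K x y + M x y) f g = kerIP K f g + kerIP M f g := by
  simp only [kerIP, add_mul, Finset.sum_add_distrib]

lemma kerIP_smul' {X : Type*} (c : ℂ) (K : X → X → ℂ) (f g : X →₀ ℂ) :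
    kerIP (fun x y => c * K x y) f g = c * kerIP K f g := by
  simp only [kerIP, Finset.mul_sum, mul_assoc]

lemma kerIP_eq_sum {X : Type*} (K : X → X → ℂ) (f g : X →₀ ℂ) :
    kerIP K f g = g.sum fun x b => f.sum fun y a => K x y * a * (starRingEnd ℂ) b := rfl

lemma kerIP_two {X : Type*} (K : X → X → ℂ) (x y : X) (c : ℂ) :
    kerIP K (Finsupp.single x 1 + Finsupp.single y c)
      (Finsupp.single x 1 + Finsupp.single y c) =
      K x x + K x y * c + (K y x * (starRingEnd ℂ) c + K y y * c * (starRingEnd ℂ) c) := by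
  classical
  rw [kerIP_eq_sum, Finsupp.sum_add_index']
  · rw [Finsupp.sum_single_index (by simp), Finsupp.sum_single_index (by simp)]
    rw [Finsupp.sum_add_index' (by simp) (by intros; ring),
      Finsupp.sum_add_index' (by simp) (by intros; ring)]
    rw [Finsupp.sum_single_index (by simp), Finsupp.sum_single_index (by simp),
      Finsupp.sum_single_index (by simp), Finsupp.sum_single_index (by simp)]
    simp
  · intro a; simp
  · intro a b c; simp [mul_add]

lemma psd_diag {X : Type*} {K : X → X → ℂ} (h : IsPSDKernel K) (x : X) : 0 ≤ K x x := by
  have := h (Finsupp.single x 1 + Finsupp.single x 0)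
  rw [kerIP_two] at this
  simpa using this

lemma psd_bound {X : Type*} {K : X → X → ℂ} (h : IsPSDKernel K) (x y : X) :
    ‖K x y‖ ≤ (K x x).re + (K y y).re := by
  have key : ∀ c, _ := fun c => kerIP_two K x y c ▸ h (Finsupp.single x 1 + Finsupp.single y c)
  have h1 := key 1
  have h2 := key (-1)
  have h3 := key Complex.I
  have h4 := key (-Complex.I)
  have hx := psd_diag h x
  have hy := psd_diag h y
  rw [Complex.le_def] at h1 h2 h3 h4 hx hy
  simp at h1 h2 h3 h4 hx hy
  have e1 : (K y x).re = (K x y).re := by linarith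
  have e2 : (K y x).im = -(K x y).im := by linarith
  have a1 : |(K x y).re| ≤ ((K x x).re + (K y y).re) / 2 := by
    rw [abs_le]; constructor <;> linarith
  have a2 : |(K x y).im| ≤ ((K x x).re + (K y y).re) / 2 := by
    rw [abs_le]; constructor <;> linarith
  have := Complex.norm_le_abs_re_add_abs_im (K x y)
  linarith

lemma isClosed_psd {X : Type*} : IsClosed {K : X → X → ℂ | IsPSDKernel K} := by
  simp only [IsPSDKernel, Set.ofPred_forall]
  refine isClosed_iInter fun f => isClosed_le continuous_const ?_
  unfold kerIP
  fun_prop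

/-- If `H` is a Hermitian kernel and `L` is a positive semidefinite kernel with
`L − H` and `L + H` positive semidefinite, then `H = H₊ − H₋` with `H₊, H₋` positive
semidefinite, `L − H₊`, `L − H₋` positive semidefinite, and `H₊, H₋` independent. -/
theorem stmt1 {X : Type*} [Nonempty X] (H L : X → X → ℂ)
    (hH : IsHermitianKernel H) (hL : IsPSDKernel L)
    (hLmH : IsPSDKernel (fun x y => L x y - H x y))
    (hLpH : IsPSDKernel (fun x y => L x y + H x y)) :
    ∃ Hp Hm : X → X → ℂ, IsPSDKernel Hp ∧ IsPSDKernel Hm ∧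
      (∀ x y, H x y = Hp x y - Hm x y) ∧
      IsPSDKernel (fun x y => L x y - Hp x y) ∧
      IsPSDKernel (fun x y => L x y - Hm x y) ∧
      (∀ P : X → X → ℂ, IsPSDKernel P →
        IsPSDKernel (fun x y => Hp x y - P x y) →
        IsPSDKernel (fun x y => Hm x y - P x y) → ∀ x y, P x y = 0) := by
  let S : Set (X → X → ℂ) := {K | IsPSDKernel K ∧ IsPSDKernel (fun x y => K x y - H x y) ∧
    IsPSDKernel (fun x y => L x y - K x y) ∧
    IsPSDKernel (fun x y => L x y - (K x y - H x y))}
  have hcl : ∀ φ : (X → X → ℂ) → (X → X → ℂ), Continuous φ →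
      IsClosed {K | IsPSDKernel (φ K)} := fun φ hφ => isClosed_psd.preimage hφ
  have hSclosed : IsClosed S :=
    (hcl _ continuous_id).inter ((hcl (fun K x y => K x y - H x y) (by fun_prop)).inter
      ((hcl (fun K x y => L x y - K x y) (by fun_prop)).inter
        (hcl (fun K x y => L x y - (K x y - H x y)) (by fun_prop))))
  have hScompact : IsCompact S := by
    have hB : IsCompact (Set.univ.pi fun x => Set.univ.pi fun y =>
        Metric.closedBall (0 : ℂ) ((L x x).re + (L y y).re)) :=
      isCompact_univ_pi fun x => isCompact_univ_pi fun y => isCompact_closedBall _ _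
    refine hB.of_isClosed_subset hSclosed ?_
    rintro K ⟨h1, -, h3, -⟩ x - y -
    rw [mem_closedBall_zero_iff]
    have hx := (Complex.le_def.1 (psd_diag h3 x)).1
    have hy := (Complex.le_def.1 (psd_diag h3 y)).1
    simp at hx hy
    linarith [psd_bound h1 x y]
  have half : ∀ K : X → X → ℂ, IsPSDKernel K → IsPSDKernel (fun x y => (1/2 : ℂ) * K x y) := by
    intro K hK f
    rw [kerIP_smul']
    refine mul_nonneg ?_ (hK f)
    rw [Complex.le_def]; norm_num
  have hmem : (fun x y => (1/2 : ℂ) * (L x y + H x y)) ∈ S := by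
    refine ⟨half _ hLpH, ?_, ?_, ?_⟩
    · convert half _ hLmH using 3; ring
    · convert half _ hLmH using 3; ring
    · convert half _ hLpH using 3; ring
  have trans : ∀ {A B C : X → X → ℂ}, IsPSDKernel (fun x y => A x y - B x y) →
      IsPSDKernel (fun x y => B x y - C x y) → IsPSDKernel (fun x y => A x y - C x y) := by
    intro A B C h1 h2 f
    have h1 := h1 f
    have h2 := h2 f
    rw [kerIP_sub'] at *
    have := add_nonneg h1 h2
    simpa using this
  obtain ⟨m, hm⟩ := exists_maximal_of_chains_bounded
    (r := fun A B : S => IsPSDKernel (fun x y => A.1 x y - B.1 x y)) (by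
      intro c hc
      rcases c.eq_empty_or_nonempty with rfl | hne
      · exact ⟨⟨_, hmem⟩, by simp⟩
      haveI : Nonempty c := hne.to_subtype
      have hcl' : ∀ a : c, IsClosed (S ∩ {M | IsPSDKernel (fun x y => a.1.1 x y - M x y)}) :=
        fun a => hSclosed.inter (hcl (fun M x y => a.1.1 x y - M x y) (by fun_prop))
      have hrefl : ∀ A : X → X → ℂ, IsPSDKernel (fun x y => A x y - A x y) := by
        intro A f; simp [kerIP]
      obtain ⟨M, hM⟩ := IsCompact.nonempty_iInter_of_directed_nonempty_isCompact_isClosed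
        (fun a : c => S ∩ {M | IsPSDKernel (fun x y => a.1.1 x y - M x y)}) (by
          intro a b
          by_cases hab : a = b
          · subst hab
            exact ⟨a, subset_rfl, subset_rfl⟩
          rcases hc a.2 b.2 (fun h => hab (Subtype.ext h)) with h | h
          · exact ⟨b, fun M hM => ⟨hM.1, trans h hM.2⟩, subset_rfl⟩
          · exact ⟨a, subset_rfl, fun M hM => ⟨hM.1, trans h hM.2⟩⟩)
        (fun a => ⟨a.1.1, a.1.2, hrefl _⟩)
        (fun a => hScompact.of_isClosed_subset (hcl' a) Set.inter_subset_left) hcl'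
      rw [Set.mem_iInter] at hM
      exact ⟨⟨M, (hM (Classical.arbitrary c)).1⟩, fun a ha => (hM ⟨a, ha⟩).2⟩)
    (fun h1 h2 => trans h1 h2)
  obtain ⟨K, hK⟩ := m
  obtain ⟨k1, k2, k3, k4⟩ := id hK
  refine ⟨K, fun x y => K x y - H x y, k1, k2, fun x y => by ring, k3, k4, ?_⟩
  intro P hP hp1 hp2
  have addP : ∀ A : X → X → ℂ, IsPSDKernel A → IsPSDKernel (fun x y => A x y + P x y) := by
    intro A hA f
    rw [kerIP_add']
    exact add_nonneg (hA f) (hP f)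
  have hmemP : (fun x y => K x y - P x y) ∈ S := by
    refine ⟨hp1, ?_, ?_, ?_⟩
    · convert hp2 using 3; ring
    · convert addP _ k3 using 3; ring
    · convert addP _ k4 using 3; ring
  have hneg := hm ⟨_, hmemP⟩ (by simpa using hP)
  have hd : ∀ x, (P x x).re ≤ 0 := by
    intro x
    have := (Complex.le_def.1 (psd_diag hneg x)).1
    simpa using this
  intro x y
  have := psd_bound hP x y
  exact norm_le_zero_iff.1 (by linarith [hd x, hd y])
end

section
/- Let Ω ⊆ ℂ be a nonempty open connected set and let K : Ω × Ω → ℂ be a Hermitian kernel (K(z,w) = conj(K(w,z))) such that for every w ∈ Ω the function z ↦ K(z,w) is holomorphic on Ω. Let Ω₀ ⊆ Ω be a nonempty open subset, and let K₀ denote the restriction of K to Ω₀ × Ω₀. If the negative signature κ₋(K₀) is finite, then κ₋(K) = κ₋(K₀). -/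
open scoped ComplexOrder

/-- The negative signature `κ₋(K)` of a Hermitian kernel: the supremum, in `ℕ∞`, of the
dimensions of subspaces `N` of finitely supported functions on which `[f,f]_K < 0` for all
nonzero `f ∈ N`. -/
noncomputable def negSig {X : Type*} (K : X → X → ℂ) : ℕ∞ :=
  ⨆ N ∈ {N : Submodule ℂ (X →₀ ℂ) | ∀ f ∈ N, f ≠ 0 → kerIP K f f < 0},
    (Module.rank ℂ N).toENat

section
open MeasureTheory Metric Set

lemma hk_jensen {f : ℂ → ℂ} {c : ℂ} {s : ℝ} (hs : 0 < s)
    (hf : AnalyticOnNhd ℂ f (closedBall c s)) (hc : f c ≠ 0) :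
    Real.log ‖f c‖ ≤ Real.circleAverage (fun z => Real.log ‖f z‖) c s := by
  have hf' : AnalyticOnNhd ℂ f (closedBall c |s|) := by rwa [abs_of_pos hs]
  rw [AnalyticOnNhd.circleAverage_log_norm hs.ne' hf' hc]
  have : 0 ≤ ∑ᶠ u, (MeromorphicOn.divisor f (closedBall c |s|) u : ℝ) * Real.log (s * ‖c - u‖⁻¹) := by
    apply finsum_nonneg
    intro u
    by_cases hu : u ∈ closedBall c |s|
    · apply mul_nonneg
      · exact_mod_cast (MeromorphicOn.AnalyticOnNhd.divisor_nonneg hf') u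
      · rcases eq_or_ne c u with rfl | hne
        · simp
        · apply Real.log_nonneg
          have h1 : 0 < ‖c - u‖ := norm_pos_iff.2 (sub_ne_zero.2 hne)
          rw [← div_eq_mul_inv, le_div_iff₀ h1, one_mul, ← dist_eq_norm, dist_comm]
          rw [abs_of_pos hs] at hu
          exact hu
    · simp [hu]
  linarith

lemma hk_circ {f : ℂ → ℂ} {c : ℂ} {s : ℝ} (hs : 0 < s)
    (hf : AnalyticOnNhd ℂ f (closedBall c s)) {W : Set ℂ} (hW : MeasurableSet W) {L : ℝ} (hL : 0 ≤ L)
    (h1 : ∀ z ∈ sphere c s, z ∉ W → ‖f z‖ ≤ 1)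
    (h2 : ∀ z ∈ sphere c s, ‖f z‖ ≤ Real.exp L) :
    ‖f c‖ ≤ Real.exp (L * volume.real ({θ : ℝ | circleMap c s θ ∈ W} ∩ Ioo (-Real.pi) Real.pi)) := by
  have hm : MeasurableSet {θ : ℝ | circleMap c s θ ∈ W} :=
    hW.preimage (continuous_circleMap c s).measurable
  by_cases hc : f c = 0
  · rw [hc, norm_zero]; positivity
  have hint : CircleIntegrable (fun z => L * W.indicator (fun _ => (1:ℝ)) z) c s := by
    unfold CircleIntegrable
    rw [intervalIntegrable_iff]
    apply Measure.integrableOn_of_bounded (M := L)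
    · rw [uIoc_of_le (by positivity), Real.volume_Ioc]; exact ENNReal.ofReal_ne_top
    · apply Measurable.aestronglyMeasurable
      apply Measurable.const_mul
      exact (measurable_const.indicator hW).comp (continuous_circleMap c s).measurable
    · filter_upwards with θ
      by_cases h : circleMap c s θ ∈ W <;> simp [h, hL, abs_of_nonneg]
  have key := hk_jensen hs hf hc
  have hle : Real.circleAverage (fun z => Real.log ‖f z‖) c s ≤
      Real.circleAverage (fun z => L * W.indicator (fun _ => (1:ℝ)) z) c s := by
    apply Real.circleAverage_mono _ hint
    · intro z hz
      rw [abs_of_pos hs] at hz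
      by_cases hzW : z ∈ W
      · simp only [hzW, indicator_of_mem, mul_one]
        by_cases h0 : f z = 0
        · simp [h0, hL]
        · rw [Real.log_le_iff_le_exp (norm_pos_iff.2 h0)]
          exact h2 z hz
      · simp only [hzW, not_false_eq_true, indicator_of_notMem, mul_zero]
        exact Real.log_nonpos (norm_nonneg _) (h1 z hz hzW)
    · exact MeromorphicOn.circleIntegrable_log_norm_of_nonneg
        (fun z hz => (hf z (sphere_subset_closedBall hz)).meromorphicAt) hs.le
  have heq : Real.circleAverage (fun z => L * W.indicator (fun _ => (1:ℝ)) z) c s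
      = (2 * Real.pi)⁻¹ * (L * volume.real ({θ : ℝ | circleMap c s θ ∈ W} ∩ Ioo (-Real.pi) Real.pi)) := by
    rw [Real.circleAverage_eq_integral_add (-Real.pi)]
    rw [intervalIntegral.integral_comp_add_right (fun θ => L * W.indicator (fun _ => (1:ℝ)) (circleMap c s θ))]
    rw [smul_eq_mul]
    congr 1
    rw [intervalIntegral.integral_const_mul]
    congr 1
    rw [intervalIntegral.integral_of_le (by linarith [Real.pi_pos]), integral_Ioc_eq_integral_Ioo]
    have : (fun θ => W.indicator (fun _ => (1:ℝ)) (circleMap c s θ)) =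
      ({θ : ℝ | circleMap c s θ ∈ W}).indicator (fun _ => (1:ℝ)) := by
      ext θ; simp [indicator]
    rw [this, integral_indicator hm]
    rw [Measure.restrict_restrict hm]
    simp only [integral_const, smul_eq_mul, mul_one, Measure.real, Measure.restrict_apply_univ]
    norm_num
    rw [show 2 * Real.pi + -Real.pi = Real.pi by ring] 
  rw [← Real.log_le_iff_le_exp (norm_pos_iff.2 hc)]
  refine key.trans (hle.trans (heq.le.trans ?_))
  have h3 : (2 * Real.pi)⁻¹ ≤ 1 := inv_le_one_of_one_le₀ (by linarith [Real.pi_gt_three])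
  have h4 : 0 ≤ L * volume.real ({θ : ℝ | circleMap c s θ ∈ W} ∩ Ioo (-Real.pi) Real.pi) := by positivity
  nlinarith

lemma hk_radius {W : Set ℂ} (hW : MeasurableSet W) {t η : ℝ} (ht : 0 < t) (hη : 0 < η) (w : ℂ)
    (hv : volume W < ENNReal.ofReal (t / 2 * (t / 2) * η)) :
    ∃ s, t / 2 < s ∧ s < t ∧
      volume.real ({θ : ℝ | circleMap w s θ ∈ W} ∩ Ioo (-Real.pi) Real.pi) ≤ η := by
  by_contra! hcon
  apply lt_irrefl (volume W)
  refine hv.trans_le ?_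
  have e1 : volume W = ∫⁻ z : ℂ, W.indicator 1 (w + z) := by
    rw [lintegral_add_left_eq_self (fun z => W.indicator (1 : ℂ → ENNReal) z) w, lintegral_indicator_one hW]
  rw [e1, ← Complex.lintegral_comp_polarCoord_symm]
  have htar : polarCoord.target = Ioi (0:ℝ) ×ˢ Ioo (-Real.pi) Real.pi := rfl
  rw [htar, Measure.volume_eq_prod, ← Measure.prod_restrict]
  have hpol : ∀ p : ℝ × ℝ, w + Complex.polarCoord.symm p = circleMap w p.1 p.2 := by
    intro p
    simp [Complex.polarCoord_symm_apply, circleMap, Complex.exp_mul_I]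
  simp_rw [hpol]
  have hcm : Measurable (fun p : ℝ × ℝ => circleMap w p.1 p.2) := by
    apply Continuous.measurable
    unfold circleMap
    fun_prop
  have hmeas : Measurable (fun p : ℝ × ℝ => ENNReal.ofReal p.1 • W.indicator (1 : ℂ → ENNReal) (circleMap w p.1 p.2)) := by
    apply Measurable.mul
    · fun_prop
    · exact (measurable_one.indicator hW).comp hcm
  rw [lintegral_prod _ hmeas.aemeasurable]
  calc ENNReal.ofReal (t / 2 * (t / 2) * η)
      = ∫⁻ x in Ioo (t/2) t, ENNReal.ofReal (t / 2) * ENNReal.ofReal η := by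
        rw [lintegral_const, Measure.restrict_apply_univ, Real.volume_Ioo, ← ENNReal.ofReal_mul (by positivity),
          ← ENNReal.ofReal_mul (by positivity)]
        congr 1; ring
    _ ≤ ∫⁻ x in Ioo (t/2) t, ∫⁻ y in Ioo (-Real.pi) Real.pi, 
          ENNReal.ofReal x • W.indicator (1 : ℂ → ENNReal) (circleMap w x y) := by
        apply setLIntegral_mono' measurableSet_Ioo
        intro x hx
        have hm : MeasurableSet {θ : ℝ | circleMap w x θ ∈ W} :=
          hW.preimage (continuous_circleMap w x).measurable
        have : ∀ y, W.indicator (1 : ℂ → ENNReal) (circleMap w x y) = 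
          ({θ : ℝ | circleMap w x θ ∈ W}).indicator 1 y := fun y => by simp [indicator]
        simp_rw [this, smul_eq_mul]
        rw [lintegral_const_mul _ (measurable_one.indicator hm), lintegral_indicator_one hm,
          Measure.restrict_apply hm]
        gcongr
        · exact hx.1.le
        · rw [ENNReal.ofReal_le_iff_le_toReal]
          · exact (hcon x hx.1 hx.2).le
          · exact ((measure_mono inter_subset_right).trans_lt (by simp)).ne
    _ ≤ _ := by
        apply lintegral_mono_set
        intro x hx
        exact (by linarith [hx.1] : (0:ℝ) < x)

noncomputable def hkDD (x : ℕ → ℂ) : ℕ → (ℂ → ℂ) → ℂ → ℂ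
  | 0, h => h
  | k + 1, h => dslope (hkDD x k h) (x k)

lemma hkDD_diff {x : ℕ → ℂ} {Ω : Set ℂ} (hΩ : IsOpen Ω) (hx : ∀ k, x k ∈ Ω) {h : ℂ → ℂ}
    (hh : DifferentiableOn ℂ h Ω) (k : ℕ) : DifferentiableOn ℂ (hkDD x k h) Ω := by
  induction k with
  | zero => exact hh
  | succ k ih => exact (Complex.differentiableOn_dslope (hΩ.mem_nhds (hx k))).2 ih

lemma hkDD_bound {x : ℕ → ℂ} {Ω : Set ℂ} (hΩ : IsOpen Ω) {c : ℂ} {R ρ M : ℝ}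
    (hR : closedBall c R ⊆ Ω) (hρ : ρ < R) (hx : ∀ k, x k ∈ ball c ρ) {h : ℂ → ℂ}
    (hh : DifferentiableOn ℂ h Ω) (hM : ∀ z ∈ closedBall c R, ‖h z‖ ≤ M) (k : ℕ) :
    ∀ z ∈ closedBall c R, ‖hkDD x k h z‖ ≤ M * (2 / (R - ρ)) ^ k := by
  have hρ0 : 0 < ρ := pos_of_mem_ball (hx 0)
  have hxΩ : ∀ k, x k ∈ Ω := fun k => hR (closedBall_subset_closedBall hρ.le (ball_subset_closedBall (hx k)))
  induction k with
  | zero => simpa [hkDD] using hM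
  | succ k ih =>
    intro z hz
    have hR0 : R ≠ 0 := by linarith
    have hd := hkDD_diff hΩ hxΩ hh (k + 1)
    refine Complex.norm_le_of_forall_mem_frontier_norm_le (U := ball c R) isBounded_ball ?_ ?_ ?_
    · apply DifferentiableOn.diffContOnCl
      rw [closure_ball _ hR0]
      exact hd.mono hR
    · intro y hy
      rw [frontier_ball _ hR0] at hy
      have h1 : R - ρ ≤ ‖y - x k‖ := by
        have := hx k
        rw [mem_ball, dist_eq_norm] at this
        rw [mem_sphere, dist_eq_norm] at hy
        have h2 : ‖y - c‖ ≤ ‖y - x k‖ + ‖x k - c‖ := by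
          calc ‖y - c‖ = ‖(y - x k) + (x k - c)‖ := by ring_nf
            _ ≤ _ := norm_add_le _ _
        linarith
      have h0 : 0 < R - ρ := by linarith
      have h3 := sub_smul_dslope (hkDD x k h) (x k) y
      have h4 : ‖y - x k‖ * ‖hkDD x (k+1) h y‖ ≤ 2 * (M * (2 / (R - ρ)) ^ k) := by
        rw [← norm_mul, ← smul_eq_mul]
        show ‖(y - x k) • dslope (hkDD x k h) (x k) y‖ ≤ _
        rw [h3]
        refine (norm_sub_le _ _).trans ?_
        have := ih y (sphere_subset_closedBall hy)
        have := ih (x k) (closedBall_subset_closedBall hρ.le (ball_subset_closedBall (hx k)))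
        linarith
      have h5 : (R - ρ) * ‖hkDD x (k+1) h y‖ ≤ 2 * (M * (2 / (R - ρ)) ^ k) :=
        (mul_le_mul_of_nonneg_right h1 (norm_nonneg _)).trans h4
      rw [pow_succ]
      rw [mul_comm, ← le_div_iff₀ h0] at h5
      refine h5.trans (le_of_eq ?_)
      field_simp
    · rw [closure_ball _ hR0]; exact hz

noncomputable def hkT (x : ℕ → ℂ) (k : ℕ) (h : ℂ → ℂ) (z : ℂ) : ℂ :=
  hkDD x k h (x k) * ∏ j ∈ Finset.range k, (z - x j)

lemma hk_newton (x : ℕ → ℂ) (h : ℂ → ℂ) (z : ℂ) (N : ℕ) :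
    h z = ∑ k ∈ Finset.range N, hkT x k h z + hkDD x N h z * ∏ j ∈ Finset.range N, (z - x j) := by
  induction N with
  | zero => simp [hkDD]
  | succ N ih =>
    rw [Finset.sum_range_succ, Finset.prod_range_succ]
    have h3 := sub_smul_dslope (hkDD x N h) (x N) z
    change (z - x N) * hkDD x (N+1) h z = _ at h3
    conv_lhs => rw [ih]
    unfold hkT
    linear_combination -(∏ j ∈ Finset.range N, (z - x j)) * h3

lemma hk_lin {x : ℕ → ℂ} (hx : Function.Injective x) (k : ℕ) :
    ∀ j, k ≤ j → ∃ v : ℂ →₀ ℂ, (v.support : Set ℂ) ⊆ range x ∧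
      ∀ h, hkDD x k h (x j) = Finsupp.linearCombination ℂ h v := by
  induction k with
  | zero =>
    intro j _
    refine ⟨Finsupp.single (x j) 1, ?_, fun h => by simp [hkDD]⟩
    intro y hy
    have := Finsupp.support_single_subset hy
    simp at this
    exact ⟨j, this.symm⟩
  | succ k ih =>
    intro j hj
    obtain ⟨v, hv, hv'⟩ := ih j (by omega)
    obtain ⟨u, hu, hu'⟩ := ih k le_rfl
    refine ⟨(x j - x k)⁻¹ • (v - u), ?_, ?_⟩
    · intro y hy
      have h1 := Finsupp.support_smul hy
      have h2 := Finsupp.support_sub h1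
      rw [Finset.mem_union] at h2
      rcases h2 with h2 | h2
      · exact hv h2
      · exact hu h2
    · intro h
      have hne : x j ≠ x k := fun e => by have := hx e; omega
      show dslope (hkDD x k h) (x k) (x j) = _
      rw [dslope_of_ne _ hne, slope_def_field, hv', hu', map_smul, map_sub, smul_eq_mul]
      field_simp

lemma hkT_lin {x : ℕ → ℂ} (hx : Function.Injective x) (k : ℕ) (z : ℂ) :
    ∃ v : ℂ →₀ ℂ, (v.support : Set ℂ) ⊆ range x ∧
      ∀ h, hkT x k h z = Finsupp.linearCombination ℂ h v := by
  obtain ⟨v, hv, hv'⟩ := hk_lin hx k k le_rfl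
  refine ⟨(∏ j ∈ Finset.range k, (z - x j)) • v, fun y hy => hv (Finsupp.support_smul hy), fun h => ?_⟩
  rw [hkT, hv', map_smul, smul_eq_mul, mul_comm]

lemma hkS_lin {x : ℕ → ℂ} (hx : Function.Injective x) (N : ℕ) (z : ℂ) :
    ∃ v : ℂ →₀ ℂ, (v.support : Set ℂ) ⊆ range x ∧
      ∀ h, ∑ k ∈ Finset.range N, hkT x k h z = Finsupp.linearCombination ℂ h v := by
  choose v hv hv' using fun k => hkT_lin hx k z
  refine ⟨∑ k ∈ Finset.range N, v k, ?_, fun h => ?_⟩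
  · intro y hy
    have := Finsupp.support_finsetSum hy
    simp only [Finset.mem_biUnion] at this
    obtain ⟨k, _, hk⟩ := this
    exact hv k hk
  · rw [map_sum]; exact Finset.sum_congr rfl fun k _ => hv' k h

lemma hk_prod_bound {x : ℕ → ℂ} {c : ℂ} {t : ℝ} (hx : ∀ k, x k ∈ ball c t) {z : ℂ}
    (hz : z ∈ ball c t) (N : ℕ) : ‖∏ j ∈ Finset.range N, (z - x j)‖ ≤ (2 * t) ^ N := by
  rw [norm_prod]
  calc ∏ j ∈ Finset.range N, ‖z - x j‖ ≤ ∏ j ∈ Finset.range N, (2 * t) := by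
        apply Finset.prod_le_prod
        · intros; positivity
        · intro j _
          have h1 := hx j
          rw [mem_ball] at h1 hz
          rw [← dist_eq_norm]
          linarith [dist_triangle_right z (x j) c]
    _ = _ := by simp

lemma hk_term {x : ℕ → ℂ} {Ω : Set ℂ} (hΩ : IsOpen Ω) {c : ℂ} {t M : ℝ}
    (hR : closedBall c (9 * t) ⊆ Ω) (hx : ∀ k, x k ∈ ball c t) {h : ℂ → ℂ}
    (hh : DifferentiableOn ℂ h Ω) (hM : ∀ z ∈ closedBall c (9 * t), ‖h z‖ ≤ M) (N : ℕ) {y : ℂ}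
    (hy : y ∈ ball c t) {z : ℂ} (hz : z ∈ ball c t) :
    ‖hkDD x N h y * ∏ j ∈ Finset.range N, (z - x j)‖ ≤ M * (1 / 2) ^ N := by
  have ht : 0 < t := pos_of_mem_ball (hx 0)
  have h1 := hkDD_bound hΩ hR (by linarith) hx hh hM N y (ball_subset_closedBall (ball_subset_ball (by linarith) hy))
  have h2 := hk_prod_bound hx hz N
  rw [norm_mul]
  calc _ ≤ (M * (2 / (9 * t - t)) ^ N) * (2 * t) ^ N := 
        mul_le_mul h1 h2 (norm_nonneg _) ((norm_nonneg _).trans h1)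
    _ = _ := by
      rw [mul_assoc, ← mul_pow]
      congr 2
      field_simp
      norm_num

lemma hk_seq {S : Set ℂ} (hS : IsOpen S) (hne : S.Nonempty) :
    ∃ x : ℕ → ℂ, Function.Injective x ∧ ∀ k, x k ∈ S := by
  obtain ⟨a, ha⟩ := hne
  have hinf : S.Infinite := infinite_of_mem_nhds a (hS.mem_nhds ha)
  exact ⟨fun k => hinf.natEmbedding S k, fun i j h => (hinf.natEmbedding S).injective (Subtype.ext h),
    fun k => (hinf.natEmbedding S k).2⟩

lemma hk_hartogs {Ω : Set ℂ} (hΩ : IsOpen Ω) {K : ℂ → ℂ → ℂ}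
    (hherm : ∀ z ∈ Ω, ∀ w ∈ Ω, K z w = (starRingEnd ℂ) (K w z))
    (hhol : ∀ w ∈ Ω, DifferentiableOn ℂ (fun z => K z w) Ω) {w₀ : ℂ} (hw₀ : w₀ ∈ Ω) :
    ∃ t > 0, ∃ M : ℝ, closedBall w₀ t ⊆ Ω ∧ ∀ z ∈ ball w₀ t, ∀ w ∈ ball w₀ t, ‖K z w‖ ≤ M := by
  obtain ⟨t, ht, hball⟩ : ∃ t > 0, closedBall w₀ (9 * t) ⊆ Ω := by
    obtain ⟨e, he, h⟩ := Metric.nhds_basis_closedBall.mem_iff.1 (hΩ.mem_nhds hw₀)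
    exact ⟨e / 9, by positivity, by rwa [mul_div_cancel₀ e (by norm_num)]⟩
  have hnorm : ∀ z ∈ Ω, ∀ w ∈ Ω, ‖K z w‖ = ‖K w z‖ := fun z hz w hw => by
    rw [hherm z hz w hw, RCLike.norm_conj]
  have hcont : ∀ z ∈ Ω, ContinuousOn (fun w => ‖K z w‖) Ω := fun z hz =>
    ((hhol z hz).continuousOn.norm).congr (fun w hw => hnorm z hz w hw)
  have hsub1 : closedBall w₀ t ⊆ closedBall w₀ (9 * t) := closedBall_subset_closedBall (by linarith)
  have hsub2 : closedBall w₀ (2 * t) ⊆ closedBall w₀ (9 * t) := closedBall_subset_closedBall (by linarith)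
  -- Baire
  have hbaire : ∃ n : ℕ, ∃ w₁ δ, 0 < δ ∧ closedBall w₁ δ ⊆ ball w₀ t ∧
      ∀ w ∈ closedBall w₁ δ, ∀ z ∈ closedBall w₀ (9 * t), ‖K z w‖ ≤ n := by
    let E : ℕ → Set ℂ := fun n => 
      (closedBall w₀ t ∩ ⋂ z ∈ closedBall w₀ (9 * t), {w | w ∈ closedBall w₀ t ∧ ‖K z w‖ ≤ n}) ∪ (ball w₀ t)ᶜ
    have hEc : ∀ n, IsClosed (E n) := by
      intro n
      refine (isClosed_closedBall.inter (isClosed_biInter fun z hz => ?_)).union isOpen_ball.isClosed_compl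
      exact ((hcont z (hball hz)).mono (hsub1.trans hball)).preimage_isClosed_of_isClosed
        isClosed_closedBall isClosed_Iic
    have hEu : ⋃ n, E n = univ := by
      rw [eq_univ_iff_forall]
      intro w
      by_cases hw : w ∈ ball w₀ t
      · have hw' := ball_subset_closedBall hw
        obtain ⟨C, hC⟩ := (isCompact_closedBall w₀ (9 * t)).exists_bound_of_continuousOn
          ((hhol w (hball (hsub1 hw'))).continuousOn.mono hball)
        obtain ⟨n, hn⟩ := exists_nat_ge C
        refine mem_iUnion.2 ⟨n, Or.inl ⟨hw', ?_⟩⟩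
        simp only [mem_iInter]
        exact fun z hz => ⟨hw', (hC z hz).trans hn⟩
      · exact mem_iUnion.2 ⟨0, Or.inr hw⟩
    have hd := dense_iUnion_interior_of_closed hEc hEu
    obtain ⟨w₁, hw₁, hw₁'⟩ := hd.inter_open_nonempty _ isOpen_ball (nonempty_ball.2 ht)
    obtain ⟨n, hn⟩ := mem_iUnion.1 hw₁'
    obtain ⟨δ, hδ, h⟩ := Metric.nhds_basis_closedBall.mem_iff.1
      ((isOpen_ball.inter isOpen_interior).mem_nhds ⟨hw₁, hn⟩)
    refine ⟨n, w₁, δ, hδ, fun y hy => (h hy).1, fun w hw z hz => ?_⟩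
    rcases interior_subset (h hw).2 with h' | h'
    · have := h'.2
      simp only [mem_iInter] at this
      exact (this z hz).2
    · exact absurd (h hw).1 h'
  obtain ⟨n, w₁, δ, hδ, hδt, hn⟩ := hbaire
  have hδΩ : closedBall w₁ δ ⊆ Ω := (hδt.trans ball_subset_closedBall).trans (hsub1.trans hball)
  obtain ⟨x, hxinj, hx1⟩ := hk_seq (isOpen_ball (x := w₁) (ε := δ / 3)) (nonempty_ball.2 (by positivity))
  have hx0 : ∀ k, x k ∈ ball w₀ t := fun k => hδt (closedBall_subset_closedBall (by linarith) (ball_subset_closedBall (hx1 k)))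
  have hxΩ : ∀ k, x k ∈ Ω := fun k => hball (hsub1 (ball_subset_closedBall (hx0 k)))
  have hfun : ∀ N z, ∃ f : ℂ → ℂ, DifferentiableOn ℂ f Ω ∧ 
      ∀ w ∈ Ω, hkT x N (fun y => K y w) z = (starRingEnd ℂ) (f w) := by
    intro N z
    obtain ⟨v, hv, hv'⟩ := hkT_lin hxinj N z
    have hvΩ : ∀ y ∈ v.support, y ∈ Ω := fun y hy => by
      obtain ⟨k, rfl⟩ := hv hy; exact hxΩ k
    refine ⟨fun w => ∑ y ∈ v.support, (starRingEnd ℂ) (v y) * K w y, ?_, ?_⟩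
    · apply DifferentiableOn.fun_sum
      intro y hy
      exact (hhol y (hvΩ y hy)).const_mul _
    · intro w hw
      rw [hv', Finsupp.linearCombination_apply, Finsupp.sum, map_sum]
      refine Finset.sum_congr rfl fun y hy => ?_
      rw [map_mul, Complex.conj_conj, smul_eq_mul, ← hherm y (hvΩ y hy) w hw]
  choose f hfd hfe using hfun
  have hfn : ∀ N z, ∀ w ∈ Ω, ‖hkT x N (fun y => K y w) z‖ = ‖f N z w‖ := fun N z w hw => by
    rw [hfe N z w hw, RCLike.norm_conj]
  -- uniform bound
  obtain ⟨A, hA1, hA⟩ : ∃ A : ℝ, 1 ≤ A ∧ ∀ w ∈ closedBall w₀ (9 * t), ∀ z ∈ ball w₀ t, ∀ N,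
      ‖f N z w‖ ≤ n * A ^ N := by
    refine ⟨max 1 (3 / δ * (2 * t)), le_max_left _ _, fun w hw z hz N => ?_⟩
    rw [← hfn N z w (hball hw), hkT, norm_mul]
    have h1 := hkDD_bound hΩ hδΩ (by linarith : δ / 3 < δ) hx1 (hhol w (hball hw))
      (M := n) (fun y hy => by rw [hnorm y (hδΩ hy) w (hball hw)]; exact hn y hy w hw) N (x N)
      (closedBall_subset_closedBall (by linarith) (ball_subset_closedBall (hx1 N)))
    have h2 := hk_prod_bound hx0 hz N
    calc _ ≤ (n * (2 / (δ - δ / 3)) ^ N) * (2 * t) ^ N := 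
          mul_le_mul h1 h2 (norm_nonneg _) ((norm_nonneg _).trans h1)
      _ = n * (3 / δ * (2 * t)) ^ N := by
        rw [mul_assoc, ← mul_pow]
        congr 3
        field_simp
        norm_num
      _ ≤ _ := by gcongr; exact le_max_right _ _
  -- pointwise bound
  have hpt : ∀ w ∈ closedBall w₀ (9 * t), ∃ C : ℕ, 
      (∀ y ∈ closedBall w₀ (9 * t), ‖K y w‖ ≤ C) ∧ ∀ N, ∀ z ∈ ball w₀ t, ‖f N z w‖ ≤ C * (1 / 2) ^ N := by
    intro w hw
    obtain ⟨C, hC⟩ := (isCompact_closedBall w₀ (9 * t)).exists_bound_of_continuousOn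
          ((hhol w (hball hw)).continuousOn.mono hball)
    obtain ⟨m, hm⟩ := exists_nat_ge C
    have hC' : ∀ y ∈ closedBall w₀ (9 * t), ‖K y w‖ ≤ m := fun y hy => (hC y hy).trans hm
    refine ⟨m, hC', fun N z hz => ?_⟩
    rw [← hfn N z w (hball hw)]
    exact hk_term hΩ hball hx0 (hhol w (hball hw)) hC' N (hx0 N) hz
  let G : ℕ → Set ℂ := fun C => closedBall w₀ (2 * t) ∩ 
    ⋂ N, ⋂ z ∈ ball w₀ t, {w | w ∈ closedBall w₀ (2 * t) ∧ ‖f N z w‖ ≤ C * (1 / 2) ^ N}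
  have hGmem : ∀ C w, w ∈ G C ↔ w ∈ closedBall w₀ (2 * t) ∧ 
      ∀ N, ∀ z ∈ ball w₀ t, ‖f N z w‖ ≤ C * (1 / 2) ^ N := by
    intro C w
    simp only [G, mem_inter_iff, mem_iInter, mem_ofPred_eq]
    constructor
    · exact fun h => ⟨h.1, fun N z hz => (h.2 N z hz).2⟩
    · exact fun h => ⟨h.1, fun N z hz => ⟨h.1, h.2 N z hz⟩⟩
  have hGc : ∀ C, IsClosed (G C) := by
    intro C
    refine isClosed_closedBall.inter (isClosed_iInter fun N => isClosed_biInter fun z hz => ?_)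
    exact ((hfd N z).continuousOn.norm.mono (hsub2.trans hball)).preimage_isClosed_of_isClosed
        isClosed_closedBall isClosed_Iic
  let W : ℕ → Set ℂ := fun C => closedBall w₀ (2 * t) \ G C
  have hWm : ∀ C, MeasurableSet (W C) := fun C => measurableSet_closedBall.diff (hGc C).measurableSet
  have hWanti : Antitone W := by
    intro C C' hCC w hw
    refine ⟨hw.1, fun h => hw.2 ?_⟩
    rw [hGmem] at h ⊢
    refine ⟨h.1, fun N z hz => (h.2 N z hz).trans ?_⟩
    gcongr
  have hWlim : Filter.Tendsto (fun C => volume (W C)) Filter.atTop (nhds 0) := by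
    have hemp : ⋂ C, W C = ∅ := by
      rw [eq_empty_iff_forall_notMem]
      intro w hw
      rw [mem_iInter] at hw
      obtain ⟨C, _, hC⟩ := hpt w (hsub2 (hw 0).1)
      exact (hw C).2 ((hGmem C w).2 ⟨(hw 0).1, hC⟩)
    have := tendsto_measure_iInter_atTop (μ := volume) (fun C => (hWm C).nullMeasurableSet) hWanti
      ⟨0, ((measure_mono sdiff_subset).trans_lt measure_closedBall_lt_top).ne⟩
    rwa [hemp, measure_empty] at this
  have hlog : 0 < Real.log (2 * A) := Real.log_pos (by linarith)
  set η : ℝ := Real.log (3 / 2) / Real.log (2 * A) with hη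
  have hη0 : 0 < η := div_pos (Real.log_pos (by norm_num)) hlog
  obtain ⟨C, hCn, hCW⟩ := ((Filter.eventually_ge_atTop (n + 1)).and
    (hWlim.eventually_lt_const (u := ENNReal.ofReal (t / 2 * (t / 2) * η)) (by simp; positivity))).exists
  have hC1 : (n : ℝ) + 1 ≤ C := by exact_mod_cast hCn
  have hC0 : (0:ℝ) < C := by have : (0:ℝ) ≤ n := Nat.cast_nonneg n; linarith
  have hq : ∀ w ∈ ball w₀ t, ∀ z ∈ ball w₀ t, ∀ N, ‖f N z w‖ ≤ C * (3 / 4) ^ N := by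
    intro w hw z hz N
    obtain ⟨s, hs1, hs2, hs3⟩ := hk_radius (hWm C) ht hη0 w hCW
    have hs0 : 0 < s := by linarith
    have hsb : closedBall w s ⊆ closedBall w₀ (2 * t) := by
      intro y hy
      rw [mem_closedBall] at hy ⊢
      rw [mem_ball] at hw
      linarith [dist_triangle y w w₀]
    have hsc := hk_circ (f := fun u => f N z u * ((C:ℂ) * (1/2) ^ N)⁻¹) hs0 (c := w) (W := W C) ?_ (hWm C)
      (L := N * Real.log (2 * A)) (by positivity) ?_ ?_
    · have hexp : Real.exp (N * Real.log (2 * A) *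
        volume.real ({θ | circleMap w s θ ∈ W C} ∩ Ioo (-Real.pi) Real.pi)) ≤ (3 / 2) ^ N := by
        rw [← Real.exp_log (by norm_num : (0:ℝ) < 3 / 2), ← Real.exp_nat_mul]
        apply Real.exp_le_exp.2
        rw [mul_assoc]
        gcongr
        calc _ ≤ Real.log (2 * A) * η := by gcongr
          _ = _ := by rw [hη]; field_simp
      have h1 := hsc.trans hexp
      simp only [norm_mul, norm_inv, norm_pow, norm_div, norm_one, Complex.norm_natCast, RCLike.norm_ofNat] at h1
      rw [← div_eq_mul_inv, div_le_iff₀ (by positivity)] at h1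
      refine h1.trans (le_of_eq ?_)
      rw [mul_left_comm, ← mul_pow]; norm_num
    · have hd : DifferentiableOn ℂ (fun u => f N z u * ((C:ℂ) * (1/2) ^ N)⁻¹) Ω := (hfd N z).mul_const _
      exact (hd.analyticOnNhd hΩ).mono ((hsb.trans hsub2).trans hball)
    · intro u hu huW
      have hu' := hsb (sphere_subset_closedBall hu)
      have huG : u ∈ G C := by by_contra h; exact huW ⟨hu', h⟩
      simp only [norm_mul, norm_inv, norm_pow, norm_div, norm_one, Complex.norm_natCast, RCLike.norm_ofNat]
      rw [← div_eq_mul_inv, div_le_one (by positivity)]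
      exact ((hGmem C u).1 huG).2 N z hz
    · intro u hu
      have hu' := hsb (sphere_subset_closedBall hu)
      simp only [norm_mul, norm_inv, norm_pow, norm_div, norm_one, Complex.norm_natCast, RCLike.norm_ofNat]
      rw [← div_eq_mul_inv, div_le_iff₀ (by positivity), Real.exp_nat_mul, Real.exp_log (by linarith)]
      refine (hA u (hsub2 hu') z hz N).trans ?_
      rw [mul_left_comm, ← mul_pow]
      rw [show 2 * A * (1 / 2) = A by ring]
      gcongr
      linarith
  refine ⟨t, ht, 4 * C, hsub1.trans hball, fun z hz w hw => ?_⟩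
  have hwc := hsub1 (ball_subset_closedBall hw)
  obtain ⟨Cw, hCw, _⟩ := hpt w hwc
  have hlim : Filter.Tendsto (fun N : ℕ => 4 * (C:ℝ) + Cw * (1 / 2) ^ N) Filter.atTop (nhds (4 * C + Cw * 0)) := 
    ((tendsto_pow_atTop_nhds_zero_of_lt_one (by norm_num) (by norm_num)).const_mul _).const_add _
  rw [mul_zero, add_zero] at hlim
  refine ge_of_tendsto' hlim fun N => ?_
  have hnw := hk_newton x (fun y => K y w) z N
  rw [hnw]
  refine (norm_add_le _ _).trans (add_le_add ?_ (hk_term hΩ hball hx0 (hhol w (hball hwc)) hCw N hz hz))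
  refine (norm_sum_le _ _).trans ?_
  calc _ ≤ ∑ k ∈ Finset.range N, (C:ℝ) * (3 / 4) ^ k := by
        refine Finset.sum_le_sum fun k _ => ?_
        rw [hfn k z w (hball hwc)]
        exact hq w hw z hz k
    _ = C * ∑ k ∈ Finset.range N, (3 / 4 : ℝ) ^ k := by rw [Finset.mul_sum]
    _ ≤ C * 4 := by
        gcongr
        rw [geom_sum_eq (by norm_num)]
        have : (0:ℝ) ≤ (3 / 4) ^ N := by positivity
        rw [div_le_iff_of_neg (by norm_num)]
        linarith
    _ = 4 * C := by ring

noncomputable def hkB (K : ℂ → ℂ → ℂ) : (ℂ →₀ ℂ) →ₗ[ℂ] (ℂ →₀ ℂ) →ₗ⋆[ℂ] ℂ :=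
  LinearMap.mk₂'ₛₗ (RingHom.id ℂ) (starRingEnd ℂ)
    (fun f g => f.sum fun y a => g.sum fun x b => K x y * a * (starRingEnd ℂ) b)
    (by
      intro f₁ f₂ g
      apply Finsupp.sum_add_index'
      · intro y; simp
      · intro y a b; rw [← Finsupp.sum_add]; congr 1; ext; ring)
    (by
      intro c f g
      rw [Finsupp.sum_smul_index' (by intro y; simp), RingHom.id_apply, Finsupp.smul_sum]
      refine Finsupp.sum_congr fun y _ => ?_
      rw [Finsupp.smul_sum]
      refine Finsupp.sum_congr fun x _ => ?_
      simp only [smul_eq_mul]; ring)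
    (by
      intro f g₁ g₂
      rw [← Finsupp.sum_add]
      refine Finsupp.sum_congr fun y _ => ?_
      apply Finsupp.sum_add_index'
      · intro y; simp
      · intro y a b; rw [map_add]; ring)
    (by
      intro c f g
      rw [Finsupp.smul_sum]
      refine Finsupp.sum_congr fun y _ => ?_
      rw [Finsupp.sum_smul_index' (by intro y; simp), Finsupp.smul_sum]
      refine Finsupp.sum_congr fun x _ => ?_
      simp only [smul_eq_mul, map_mul]; ring)

lemma hkB_apply (K : ℂ → ℂ → ℂ) (f g : ℂ →₀ ℂ) :
    hkB K f g = f.sum fun y a => g.sum fun x b => K x y * a * (starRingEnd ℂ) b := rfl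

lemma hkB_single (K : ℂ → ℂ → ℂ) (x y a b : ℂ) :
    hkB K (Finsupp.single y a) (Finsupp.single x b) = K x y * a * (starRingEnd ℂ) b := by
  simp [hkB_apply]

lemma hkB_herm {Ω : Set ℂ} {K : ℂ → ℂ → ℂ}
    (hherm : ∀ z ∈ Ω, ∀ w ∈ Ω, K z w = (starRingEnd ℂ) (K w z)) {f g : ℂ →₀ ℂ}
    (hf : (f.support : Set ℂ) ⊆ Ω) (hg : (g.support : Set ℂ) ⊆ Ω) :
    hkB K f g = (starRingEnd ℂ) (hkB K g f) := by
  simp only [hkB_apply, Finsupp.sum, map_sum]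
  rw [Finset.sum_comm]
  refine Finset.sum_congr rfl fun x hx => Finset.sum_congr rfl fun y hy => ?_
  simp only [map_mul, Complex.conj_conj]
  rw [hherm x (hg hx) y (hf hy)]; ring

noncomputable def hkC (v : ℂ →₀ ℂ) : ℂ →₀ ℂ := v.mapRange (starRingEnd ℂ) (map_zero _)

lemma hkC_support (v : ℂ →₀ ℂ) : (hkC v).support ⊆ v.support := Finsupp.support_mapRange

lemma hkB_right (K : ℂ → ℂ → ℂ) (f v : ℂ →₀ ℂ) :
    hkB K f (hkC v) = Finsupp.linearCombination ℂ (fun x => hkB K f (Finsupp.single x 1)) v := by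
  induction v using Finsupp.induction_linear with
  | zero => simp [hkC]
  | add u v hu hv =>
    have : hkC (u + v) = hkC u + hkC v := Finsupp.mapRange_add (by simp) _ _
    rw [this, map_add, map_add, hu, hv]
  | single x a =>
    have : hkC (Finsupp.single x a) = (starRingEnd ℂ a) • Finsupp.single x 1 := by simp [hkC]
    rw [this, map_smulₛₗ]; simp

def hkNeg (K : ℂ → ℂ → ℂ) (U : Set ℂ) (n : ℕ) : Prop :=
  ∃ F : Fin n → ℂ →₀ ℂ, (∀ i, ((F i).support : Set ℂ) ⊆ U) ∧
    ∀ c : Fin n → ℂ, c ≠ 0 → (hkB K (∑ i, c i • F i) (∑ i, c i • F i)).re < 0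

lemma hkB_gram (K : ℂ → ℂ → ℂ) {n : ℕ} (F : Fin n → ℂ →₀ ℂ) (c : Fin n → ℂ) :
    hkB K (∑ i, c i • F i) (∑ i, c i • F i) =
      ∑ i, ∑ j, c i * (starRingEnd ℂ) (c j) * hkB K (F i) (F j) := by
  simp only [map_sum, LinearMap.sum_apply, map_smulₛₗ, LinearMap.smul_apply, smul_eq_mul, RingHom.id_apply]
  simp only [Finset.mul_sum, mul_assoc]
  rw [Finset.sum_comm]
  refine Finset.sum_congr rfl fun x hx => Finset.sum_congr rfl fun y hy => ?_
  ring

lemma hk_open (K : ℂ → ℂ → ℂ) {n : ℕ} (F : Fin n → ℂ →₀ ℂ) (F' : ℕ → Fin n → ℂ →₀ ℂ)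
    (hneg : ∀ c : Fin n → ℂ, c ≠ 0 → (hkB K (∑ i, c i • F i) (∑ i, c i • F i)).re < 0)
    (hlim : ∀ i j, Filter.Tendsto (fun N => hkB K (F' N i) (F' N j)) Filter.atTop (nhds (hkB K (F i) (F j)))) :
    ∃ N, ∀ c : Fin n → ℂ, c ≠ 0 → (hkB K (∑ i, c i • F' N i) (∑ i, c i • F' N i)).re < 0 := by
  let Q : (Fin n → Fin n → ℂ) → (Fin n → ℂ) → ℝ := fun G c =>
    (∑ i, ∑ j, c i * (starRingEnd ℂ) (c j) * G i j).re
  have hQ : Continuous (fun p : (Fin n → Fin n → ℂ) × (Fin n → ℂ) => Q p.1 p.2) := by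
    have hc := Complex.continuous_conj
    apply Complex.continuous_re.comp
    refine continuous_finsetSum _ fun i _ => continuous_finsetSum _ fun j _ => ?_
    refine Continuous.mul (Continuous.mul (by fun_prop) (hc.comp (by fun_prop))) (by fun_prop)
  have h1 : ∀ᶠ G in nhds (fun i j => hkB K (F i) (F j)), ∀ c ∈ sphere (0 : Fin n → ℂ) 1, Q G c < 0 := by
    apply (isCompact_sphere (0 : Fin n → ℂ) 1).eventually_forall_of_forall_eventually
    intro c hc
    have hc0 : c ≠ 0 := by
      rintro rfl; simp at hc
    have := hneg c hc0
    rw [hkB_gram] at this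
    exact hQ.continuousAt.eventually_lt_const this
  have h2 : Filter.Tendsto (fun N => fun i j => hkB K (F' N i) (F' N j)) Filter.atTop 
      (nhds (fun i j => hkB K (F i) (F j))) := 
    tendsto_pi_nhds.2 fun i => tendsto_pi_nhds.2 fun j => hlim i j
  obtain ⟨N, hN⟩ := (h2.eventually h1).exists
  refine ⟨N, fun c hc => ?_⟩
  have hn : 0 < ‖c‖ := norm_pos_iff.2 hc
  have h3 := hN ((‖c‖ : ℂ)⁻¹ • c) (by simp [norm_smul, hn.ne'])
  rw [hkB_gram]
  have h4 : Q (fun i j => hkB K (F' N i) (F' N j)) ((‖c‖ : ℂ)⁻¹ • c) = 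
      (‖c‖⁻¹ ^ 2) * Q (fun i j => hkB K (F' N i) (F' N j)) c := by
    simp only [Q]
    rw [← Complex.re_ofReal_mul, Finset.mul_sum]
    congr 1
    refine Finset.sum_congr rfl fun i _ => ?_
    rw [Finset.mul_sum]
    refine Finset.sum_congr rfl fun j _ => ?_
    simp only [Pi.smul_apply, smul_eq_mul, map_mul, map_inv₀, Complex.conj_ofReal]
    push_cast
    ring
  rw [h4] at h3
  exact (pos_iff_neg_of_mul_neg h3).1 (by positivity)

lemma hk_approx {x : ℕ → ℂ} {Ω : Set ℂ} (hΩ : IsOpen Ω) {c : ℂ} {t : ℝ}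
    (hR : closedBall c (9 * t) ⊆ Ω) (hx : ∀ k, x k ∈ ball c t) (hxi : Function.Injective x) (N : ℕ)
    (w : ℂ) : ∃ v : ℂ →₀ ℂ, (v.support : Set ℂ) ⊆ range x ∧ (w ∈ ball c t → 
      ∀ (h : ℂ → ℂ) (M : ℝ), DifferentiableOn ℂ h Ω → (∀ z ∈ closedBall c (9 * t), ‖h z‖ ≤ M) →
      ‖Finsupp.linearCombination ℂ h v - h w‖ ≤ M * (1 / 2) ^ N) := by
  obtain ⟨v, hv, hv'⟩ := hkS_lin hxi N w
  refine ⟨v, hv, fun hw h M hh hM => ?_⟩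
  rw [← hv', norm_sub_rev]
  have := hk_term hΩ hR hx hh hM N hw hw
  rw [hk_newton x h w N]
  simpa using this

lemma hk_lc_congr {h h' : ℂ → ℂ} {v : ℂ →₀ ℂ} (H : ∀ y ∈ v.support, h y = h' y) :
    Finsupp.linearCombination ℂ h v = Finsupp.linearCombination ℂ h' v := by
  simp only [Finsupp.linearCombination_apply]
  exact Finsupp.sum_congr fun y hy => by rw [H y hy]

lemma hk_step {Ω U : Set ℂ} (hΩ : IsOpen Ω) {K : ℂ → ℂ → ℂ}
    (hherm : ∀ z ∈ Ω, ∀ w ∈ Ω, K z w = (starRingEnd ℂ) (K w z))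
    (hhol : ∀ w ∈ Ω, DifferentiableOn ℂ (fun z => K z w) Ω) (hU : U ⊆ Ω) {c : ℂ} {t M : ℝ}
    (hR : closedBall c (9 * t) ⊆ Ω)
    (hM : ∀ z ∈ closedBall c (9 * t), ∀ w ∈ closedBall c (9 * t), ‖K z w‖ ≤ M)
    {x : ℕ → ℂ} (hx : ∀ k, x k ∈ ball c t) (hxU : ∀ k, x k ∈ U) (hxi : Function.Injective x) {n : ℕ}
    (hn : hkNeg K (U ∪ ball c t) n) : hkNeg K U n := by
  classical
  have ht : 0 < t := pos_of_mem_ball (hx 0)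
  have hb9 : ball c t ⊆ closedBall c (9 * t) := ball_subset_closedBall.trans (closedBall_subset_closedBall (by linarith))
  choose v hv hva using fun N w => hk_approx hΩ hR hx hxi N w
  have hvU : ∀ N w, ((v N w).support : Set ℂ) ⊆ U := fun N w y hy => by
    obtain ⟨k, rfl⟩ := hv N w hy; exact hxU k
  let τ : ℕ → ℂ → ℂ →₀ ℂ := fun N y => if y ∈ U then Finsupp.single y 1 else hkC (v N y)
  have hτU : ∀ N y, ((τ N y).support : Set ℂ) ⊆ U := by
    intro N y
    by_cases hy : y ∈ U
    · simp only [τ, hy, if_true]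
      intro z hz
      have := Finsupp.support_single_subset hz
      simp at this
      rwa [this]
    · simp only [τ, hy, if_false]
      exact fun z hz => hvU N y (hkC_support _ hz)
  have hpow : Filter.Tendsto (fun N : ℕ => (1 / 2 : ℝ) ^ N) Filter.atTop (nhds 0) := 
    tendsto_pow_atTop_nhds_zero_of_lt_one (by norm_num) (by norm_num)
  have hsing : ∀ z ∈ Ω, (((Finsupp.single z (1:ℂ)).support : Finset ℂ) : Set ℂ) ⊆ Ω := by
    intro z hz y hy
    have := Finsupp.support_single_subset hy
    simp at this
    rwa [this]
  have hcv : ∀ z N w, hkB K (Finsupp.single z 1) (hkC (v N w)) = 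
      Finsupp.linearCombination ℂ (fun y => K y z) (v N w) := by
    intro z N w
    rw [hkB_right]
    congr 2
    ext y; simp [hkB_single]
  have hi : ∀ w ∈ U ∪ ball c t, ∀ z ∈ Ω, 
      Filter.Tendsto (fun N => hkB K (Finsupp.single z 1) (τ N w)) Filter.atTop (nhds (K w z)) := by
    intro w hw z hz
    by_cases hwU : w ∈ U
    · simp only [τ, hwU, if_true, hkB_single]
      simp
    · have hwb : w ∈ ball c t := hw.resolve_left hwU
      simp only [τ, hwU, if_false, hcv]
      obtain ⟨C, hC⟩ := (isCompact_closedBall c (9 * t)).exists_bound_of_continuousOn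
          ((hhol z hz).continuousOn.mono hR)
      rw [tendsto_iff_norm_sub_tendsto_zero]
      refine squeeze_zero (fun _ => norm_nonneg _) (fun N => hva N w hwb _ C (hhol z hz) hC) ?_
      simpa using hpow.const_mul C
  have hii : ∀ y ∈ U ∪ ball c t, ∀ w ∈ U ∪ ball c t,
      Filter.Tendsto (fun N => hkB K (τ N y) (τ N w)) Filter.atTop (nhds (K w y)) := by
    intro y hy w hw
    have hyΩ : y ∈ Ω := hy.elim (fun h => hU h) (fun h => hR (hb9 h))
    have hwΩ : w ∈ Ω := hw.elim (fun h => hU h) (fun h => hR (hb9 h))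
    by_cases hyU : y ∈ U
    · have := hi w hw y hyΩ
      have e : ∀ N, τ N y = Finsupp.single y 1 := fun N => by simp only [τ, hyU, if_true]
      simpa only [e] using this
    by_cases hwU : w ∈ U
    · have := (Complex.continuous_conj.tendsto _).comp (hi y hy w hwΩ)
      rw [← hherm w hwΩ y hyΩ] at this
      have e : ∀ N, τ N w = Finsupp.single w 1 := fun N => by simp only [τ, hwU, if_true]
      refine this.congr fun N => ?_
      rw [e, Function.comp_apply, ← hkB_herm hherm ((hτU N y).trans hU) (hsing w hwΩ)]
    have hyb := hy.resolve_left hyU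
    have hwb := hw.resolve_left hwU
    have ey : ∀ N, τ N y = hkC (v N y) := fun N => by simp only [τ, hyU, if_false]
    have ew : ∀ N, τ N w = hkC (v N w) := fun N => by simp only [τ, hwU, if_false]
    let g : ℕ → ℂ → ℂ := fun N z => hkB K (τ N y) (Finsupp.single z 1)
    have hg : ∀ N, ∀ z, g N z = ∑ u ∈ (τ N y).support, K z u * τ N y u := by
      intro N z
      simp [g, hkB_apply, Finsupp.sum]
    have hgd : ∀ N, DifferentiableOn ℂ (fun z => g N z - K z y) Ω := by
      intro N
      refine DifferentiableOn.sub ?_ (hhol y hyΩ)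
      refine DifferentiableOn.congr ?_ (fun z _ => hg N z)
      apply DifferentiableOn.fun_sum
      intro u hu
      exact (hhol u (hU (hτU N y hu))).mul_const _
    have hgb : ∀ N, ∀ z ∈ closedBall c (9 * t), ‖g N z - K z y‖ ≤ M * (1 / 2) ^ N := by
      intro N z hz
      have h1 := hva N y hyb (fun u => K u z) M (hhol z (hR hz)) (fun u hu => hM u hu z hz)
      rw [← hcv, ← ey] at h1
      simp only [g]
      rw [hkB_herm hherm ((hτU N y).trans hU) (hsing z (hR hz)), hherm z (hR hz) y hyΩ, ← map_sub, RCLike.norm_conj]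
      exact h1
    rw [tendsto_iff_norm_sub_tendsto_zero]
    have hM0 : 0 ≤ M := (norm_nonneg _).trans (hM y (hb9 hyb) y (hb9 hyb))
    refine squeeze_zero (g := fun N => (3 * M) * (1 / 2) ^ N) (fun _ => norm_nonneg _) (fun N => ?_) (by simpa using hpow.const_mul (3 * M))
    rw [ew, hkB_right]
    change ‖Finsupp.linearCombination ℂ (g N) (v N w) - K w y‖ ≤ _
    have h1 := hva N w hwb _ M (hhol y hyΩ) (fun u hu => hM u hu y (hb9 hyb))
    have h2 := hva N w hwb _ _ (hgd N) (hgb N)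
    have h3 := hgb N w (hb9 hwb)
    have h4 : Finsupp.linearCombination ℂ (g N) (v N w) = 
      Finsupp.linearCombination ℂ (fun z => g N z - K z y) (v N w) + 
      Finsupp.linearCombination ℂ (fun z => K z y) (v N w) := by
      simp only [Finsupp.linearCombination_apply]
      rw [← Finsupp.sum_add]
      refine Finsupp.sum_congr fun u _ => ?_
      simp only [smul_eq_mul]; ring
    have hp1 : ((1:ℝ) / 2) ^ N ≤ 1 := pow_le_one₀ (by norm_num) (by norm_num)
    have hp0 : (0:ℝ) ≤ (1 / 2) ^ N := by positivity
    have h5 : M * (1 / 2 : ℝ) ^ N * (1 / 2) ^ N ≤ M * (1 / 2) ^ N := 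
      mul_le_of_le_one_right (by positivity) hp1
    rw [h4]
    calc _ = ‖(Finsupp.linearCombination ℂ (fun z => g N z - K z y) (v N w) - (g N w - K w y)) + 
            (g N w - K w y) + (Finsupp.linearCombination ℂ (fun z => K z y) (v N w) - K w y)‖ := by
            congr 1; ring
      _ ≤ _ := norm_add₃_le
      _ ≤ _ := by linarith
  obtain ⟨F, hF, hFneg⟩ := hn
  obtain ⟨N, hN⟩ := hk_open K F (fun N i => Finsupp.linearCombination ℂ (τ N) (F i)) hFneg (by
    intro i j
    have e : ∀ N, hkB K (Finsupp.linearCombination ℂ (τ N) (F i)) (Finsupp.linearCombination ℂ (τ N) (F j)) =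
        ∑ y ∈ (F i).support, ∑ w ∈ (F j).support, hkB K (τ N y) (τ N w) * F i y * (starRingEnd ℂ) (F j w) := by
      intro N
      simp only [Finsupp.linearCombination_apply, Finsupp.sum, map_sum, LinearMap.sum_apply, map_smulₛₗ,
        LinearMap.smul_apply, smul_eq_mul, RingHom.id_apply]
      simp only [Finset.mul_sum]
      rw [Finset.sum_comm]
      refine Finset.sum_congr rfl fun _ _ => Finset.sum_congr rfl fun _ _ => ?_
      ring
    simp_rw [e]
    rw [hkB_apply]
    refine tendsto_finsetSum _ fun y hy => tendsto_finsetSum _ fun w hw => ?_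
    exact ((hii y (hF i hy) w (hF j hw)).mul_const _).mul_const _)
  refine ⟨_, fun i => ?_, hN⟩
  intro z hz
  simp only [Finsupp.linearCombination_apply, Finsupp.sum] at hz
  have := Finsupp.support_finsetSum hz
  simp only [Finset.mem_biUnion] at this
  obtain ⟨k, _, hk⟩ := this
  exact hτU N k (Finsupp.support_smul hk)

lemma hk_main {Ω Ω₀ : Set ℂ} (hΩ : IsOpen Ω) (hconn : IsPreconnected Ω) (hΩ₀ : IsOpen Ω₀)
    (hne : Ω₀.Nonempty) (hsub : Ω₀ ⊆ Ω) {K : ℂ → ℂ → ℂ}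
    (hherm : ∀ z ∈ Ω, ∀ w ∈ Ω, K z w = (starRingEnd ℂ) (K w z))
    (hhol : ∀ w ∈ Ω, DifferentiableOn ℂ (fun z => K z w) Ω) (n : ℕ) (h : hkNeg K Ω n) :
    hkNeg K Ω₀ n := by
  let S : Set (Set ℂ) := {U | IsOpen U ∧ Ω₀ ⊆ U ∧ U ⊆ Ω ∧ ∀ n, hkNeg K U n → hkNeg K Ω₀ n}
  obtain ⟨U, -, hUmax⟩ := zorn_subset_nonempty S (by
    intro c hc hch hcne
    refine ⟨⋃₀ c, ⟨isOpen_sUnion fun s hs => (hc hs).1, ?_, sUnion_subset fun s hs => (hc hs).2.2.1, ?_⟩,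
      fun s hs => subset_sUnion_of_mem hs⟩
    · obtain ⟨s, hs⟩ := hcne
      exact (hc hs).2.1.trans (subset_sUnion_of_mem hs)
    · rintro n ⟨F, hF, hneg⟩
      obtain ⟨s, hs, hss⟩ := hch.directedOn.exists_mem_subset_of_finite_of_subset_sUnion hcne
        (s := ⋃ i, ((F i).support : Set ℂ)) (finite_iUnion fun i => (F i).support.finite_toSet)
        (iUnion_subset hF)
      exact (hc hs).2.2.2 n ⟨F, fun i => (subset_iUnion (fun i => ((F i).support : Set ℂ)) i).trans hss, hneg⟩)
    Ω₀ ⟨hΩ₀, subset_rfl, hsub, fun _ h => h⟩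
  obtain ⟨hUo, hU0, hUΩ, hUn⟩ := hUmax.prop
  have key : closure U ∩ Ω ⊆ U := by
    rintro w ⟨hwU, hwΩ⟩
    obtain ⟨t, ht, M, hb, hM⟩ := hk_hartogs hΩ hherm hhol hwΩ
    have h9 : closedBall w (9 * (t / 10)) ⊆ ball w t := closedBall_subset_ball (by linarith)
    have h1 : ball w (t / 10) ⊆ closedBall w t := 
      ball_subset_closedBall.trans (closedBall_subset_closedBall (by linarith))
    obtain ⟨x, hxi, hx⟩ := hk_seq (S := U ∩ ball w (t / 10)) (hUo.inter isOpen_ball) (by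
      obtain ⟨y, hy, hy'⟩ := mem_closure_iff.1 hwU (ball w (t / 10)) isOpen_ball (mem_ball_self (by positivity))
      exact ⟨y, hy', hy⟩)
    have hmem : U ∪ ball w (t / 10) ∈ S := by
      refine ⟨hUo.union isOpen_ball, hU0.trans subset_union_left, union_subset hUΩ (h1.trans hb), ?_⟩
      intro n hn
      exact hUn n (hk_step hΩ hherm hhol hUΩ (h9.trans (ball_subset_closedBall.trans hb))
        (fun z hz w hw => hM z (h9 hz) w (h9 hw)) (fun k => (hx k).2) (fun k => (hx k).1) hxi hn)
    have := hUmax.le_of_ge hmem subset_union_left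
    exact this (Or.inr (mem_ball_self (by positivity)))
  have hfull : Ω ⊆ U := hconn.subset_of_closure_inter_subset hUo
    (hne.mono fun x hx => ⟨hsub hx, hU0 hx⟩) key
  have : U = Ω := hUΩ.antisymm hfull
  exact hUn n (this ▸ h)

lemma hk_ker {U : Set ℂ} (K : ℂ → ℂ → ℂ) (f g : ↥U →₀ ℂ) :
    kerIP (fun z w : ↥U => K z w) f g =
      hkB K (Finsupp.mapDomain Subtype.val f) (Finsupp.mapDomain Subtype.val g) := by
  rw [hkB_apply, Finsupp.sum_mapDomain_index_inj Subtype.val_injective]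
  simp_rw [Finsupp.sum_mapDomain_index_inj Subtype.val_injective]
  rw [kerIP, Finset.sum_comm]
  rfl

lemma hk_supp {U : Set ℂ} (f : ↥U →₀ ℂ) :
    ((Finsupp.mapDomain Subtype.val f : ℂ →₀ ℂ).support : Set ℂ) ⊆ U := by
  classical
  intro z hz
  have := Finsupp.mapDomain_support hz
  simp only [Finset.mem_image] at this
  obtain ⟨a, _, rfl⟩ := this
  exact a.2

lemma hk_lt {Ω U : Set ℂ} (hU : U ⊆ Ω) {K : ℂ → ℂ → ℂ}
    (hherm : ∀ z ∈ Ω, ∀ w ∈ Ω, K z w = (starRingEnd ℂ) (K w z)) (f : ↥U →₀ ℂ) :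
    kerIP (fun z w : ↥U => K z w) f f < 0 ↔
      (hkB K (Finsupp.mapDomain Subtype.val f) (Finsupp.mapDomain Subtype.val f)).re < 0 := by
  rw [hk_ker, Complex.lt_def]
  have h := hkB_herm hherm ((hk_supp f).trans hU) ((hk_supp f).trans hU)
  have h2 := Complex.conj_eq_iff_im.1 h.symm
  simp [h2]

lemma hk_mapsum {U : Set ℂ} {n : ℕ} (c : Fin n → ℂ) (v : Fin n → (↥U →₀ ℂ)) :
    (Finsupp.mapDomain Subtype.val (∑ i, c i • v i) : ℂ →₀ ℂ) =
      ∑ i, c i • Finsupp.mapDomain Subtype.val (v i) := by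
  rw [Finsupp.mapDomain_finsetSum]
  simp only [Finsupp.mapDomain_smul]

lemma hk_rank {V : Type*} [AddCommGroup V] [Module ℂ V] (N : Submodule ℂ V) (n : ℕ) :
    (n : ℕ∞) ≤ (Module.rank ℂ N).toENat ↔ ∃ v : Fin n → V, (∀ i, v i ∈ N) ∧ LinearIndependent ℂ v := by
  rw [Cardinal.natCast_le_toENat, Module.le_rank_iff]
  constructor
  · rintro ⟨v, hv⟩
    exact ⟨fun i => v i, fun i => (v i).2, hv.map' N.subtype (Submodule.ker_subtype N)⟩
  · rintro ⟨v, hv, h⟩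
    exact ⟨fun i => ⟨v i, hv i⟩, LinearIndependent.of_comp N.subtype h⟩

lemma hk_neg_iff {Ω U : Set ℂ} (hU : U ⊆ Ω) {K : ℂ → ℂ → ℂ}
    (hherm : ∀ z ∈ Ω, ∀ w ∈ Ω, K z w = (starRingEnd ℂ) (K w z)) (n : ℕ) :
    (n : ℕ∞) ≤ negSig (fun z w : ↥U => K z w) ↔ hkNeg K U n := by
  constructor
  · intro h
    rcases n with _ | n
    · exact ⟨fun _ => 0, fun i => i.elim0, fun c hc => (hc (Subsingleton.elim _ _)).elim⟩
    have h' : ∃ N : Submodule ℂ (↥U →₀ ℂ), (∀ f ∈ N, f ≠ 0 → kerIP (fun z w : ↥U => K z w) f f < 0) ∧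
        ((n + 1 : ℕ) : ℕ∞) ≤ (Module.rank ℂ N).toENat := by
      by_contra! hcon
      have : negSig (fun z w : ↥U => K z w) ≤ (n : ℕ∞) := by
        refine iSup₂_le fun N hN => ?_
        have := hcon N hN
        push_cast at this
        exact Order.le_of_lt_add_one this
      have h3 := h.trans this
      have h4 : n + 1 ≤ n := by exact_mod_cast h3
      omega
    obtain ⟨N, hN, hr⟩ := h'
    obtain ⟨v, hvN, hv⟩ := (hk_rank N _).1 hr
    refine ⟨fun i => Finsupp.mapDomain Subtype.val (v i), fun i => hk_supp _, fun c hc => ?_⟩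
    rw [← hk_mapsum c v, ← hk_lt hU hherm]
    apply hN
    · exact N.sum_mem fun i _ => N.smul_mem _ (hvN i)
    · intro h0
      apply hc
      funext i
      exact Fintype.linearIndependent_iff.1 hv c h0 i
  · rintro ⟨F, hF, hneg⟩
    have hpull : ∀ i, ∃ f : ↥U →₀ ℂ, (Finsupp.mapDomain Subtype.val f : ℂ →₀ ℂ) = F i := by
      intro i
      refine ⟨Finsupp.comapDomain Subtype.val (F i) Subtype.val_injective.injOn, ?_⟩
      exact Finsupp.mapDomain_comapDomain _ Subtype.val_injective _ (by simpa using hF i)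
    choose f hf using hpull
    have hneg' : ∀ c : Fin n → ℂ, c ≠ 0 → 
        kerIP (fun z w : ↥U => K z w) (∑ i, c i • f i) (∑ i, c i • f i) < 0 := by
      intro c hc
      rw [hk_lt hU hherm, hk_mapsum]
      simpa [hf] using hneg c hc
    have hli : LinearIndependent ℂ f := by
      rw [Fintype.linearIndependent_iff]
      intro c h0
      by_contra! hcon
      obtain ⟨i, hi⟩ := hcon
      have := hneg' c (fun h => hi (by rw [h]; rfl))
      rw [h0] at this
      simp [kerIP] at this
    have hmem : Submodule.span ℂ (range f) ∈ {N : Submodule ℂ (↥U →₀ ℂ) | 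
        ∀ f ∈ N, f ≠ 0 → kerIP (fun z w : ↥U => K z w) f f < 0} := by
      intro g hg hg0
      obtain ⟨c, rfl⟩ := (Submodule.mem_span_range_iff_exists_fun ℂ).1 hg
      apply hneg'
      rintro rfl
      simp at hg0
    refine le_trans ?_ (le_iSup₂ (f := fun N (_ : N ∈ {N : Submodule ℂ (↥U →₀ ℂ) | 
        ∀ f ∈ N, f ≠ 0 → kerIP (fun z w : ↥U => K z w) f f < 0}) => (Module.rank ℂ N).toENat) _ hmem)
    exact (hk_rank _ n).2 ⟨f, fun i => Submodule.subset_span (mem_range_self i), hli⟩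

end

/-- Let `Ω ⊆ ℂ` be a nonempty open connected set and `K` a Hermitian kernel on
`Ω` that is holomorphic in the first variable. If the restriction `K₀` of `K` to a nonempty
open subset `Ω₀ ⊆ Ω` has finite negative signature, then `κ₋(K) = κ₋(K₀)`. -/
theorem stmt14 (Ω Ω₀ : Set ℂ) (hΩopen : IsOpen Ω) (hΩconn : IsConnected Ω)
    (hΩ₀open : IsOpen Ω₀) (hΩ₀ne : Ω₀.Nonempty) (hsub : Ω₀ ⊆ Ω)
    (K : ℂ → ℂ → ℂ)
    (hherm : ∀ z ∈ Ω, ∀ w ∈ Ω, K z w = (starRingEnd ℂ) (K w z))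
    (hhol : ∀ w ∈ Ω, DifferentiableOn ℂ (fun z => K z w) Ω)
    (hfin : negSig (fun z w : ↥Ω₀ => K z w) < ⊤) :
    negSig (fun z w : ↥Ω => K z w) = negSig (fun z w : ↥Ω₀ => K z w) := by
  refine ENat.eq_of_forall_natCast_le_iff fun n => ?_
  rw [hk_neg_iff subset_rfl hherm, hk_neg_iff hsub hherm]
  constructor
  · exact hk_main hΩopen hΩconn.isPreconnected hΩ₀open hΩ₀ne hsub hherm hhol n
  · rintro ⟨F, hF, h⟩
    exact ⟨F, fun i => (hF i).trans hsub, h⟩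
end
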